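/- arXiv:math/9810132 — 2 statements merged into one kernel-verified Lean document; each statement's English description precedes it below -/
import Mathlib

section
/- Let n be a natural number, E = (Fin n → ℝ), and equip C^∞ vector fields on E with the componentwise multiplication (X∘Y)(p)(i) := X(p)(i) · Y(p)(i). If X : E → E is a C^∞ vector field such that P_X(Z,W) := [X, Z∘W] − [X,Z]∘W − Z∘[X,W] vanishes for all C^∞ vector fields Z, W : E → E, then X is a constant map (each component function of X is constant). (Proposition 5.1b: on a split semisimple Frobenius manifold the Poisson subalgebra B is spanned over the constants by the basic idempotent fields e_i.) -/
/-!
For a constant field `e` the bracket `[X, e]` is `-DX(e)`. If `e` is moreover idempotent, then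
`P_X(e, e) = 0` reads `DX(e) = DX(e) e + e DX(e)`, and multiplying by `e` gives `e DX(e) = 0`, hence
`DX(e) = 0`. So `DX` vanishes as soon as the idempotents have dense span, as the coordinate
idempotents of `Fin n → ℝ` do.
-/

open VectorField

/-- Componentwise multiplication of vector fields on `Fin n → ℝ`:
`(X∘Y)(p)(i) = X(p)(i) * Y(p)(i)`. -/
def cmul {n : ℕ} (X Y : (Fin n → ℝ) → (Fin n → ℝ)) : (Fin n → ℝ) → (Fin n → ℝ) :=
  fun p i => X p i * Y p i

theorem eq_zero_of_eq_mul_add_mul_of_isIdempotentElem {A : Type*} [NonUnitalCommRing A] {e x : A}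
    (he : IsIdempotentElem e) (hx : x = x * e + e * x) : x = 0 := by
  have mul_eq_add : e * x = e * x + e * x :=
    calc e * x = e * (x * e + e * x) := congrArg (e * ·) hx
      _ = e * x + e * x := by rw [mul_comm x e, mul_add, ← mul_assoc, he.eq]
  have mul_eq_zero : e * x = 0 := left_eq_add.mp mul_eq_add
  rw [hx, mul_comm x e, mul_eq_zero, add_zero]

theorem isIdempotentElem_basisFun {ι R : Type*} [Finite ι] [Semiring R] (i : ι) :
    IsIdempotentElem (Pi.basisFun R ι i) := by
  classical
  rw [IsIdempotentElem, Pi.basisFun_apply, ← Pi.single_mul, one_mul]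

theorem lieBracket_const_right {𝕜 E : Type*} [NontriviallyNormedField 𝕜] [NormedAddCommGroup E]
    [NormedSpace 𝕜 E] (X : E → E) (v p : E) :
    lieBracket 𝕜 X (fun _ => v) p = -fderiv 𝕜 X p v := by
  simp [lieBracket]

/-- The deviation `P_X(Z, W) = [X, Z ∘ W] - [X, Z] ∘ W - Z ∘ [X, W]` of `[X, ·]` from being a
derivation of the pointwise product `∘` of vector fields on a normed algebra `A`, encoded as the
multiplication of functions `A → A`; on `Fin n → ℝ` this product is definitionally `cmul`. -/
noncomputable def Pdev (𝕜 : Type*) {A : Type*} [NontriviallyNormedField 𝕜]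
    [NonUnitalNormedRing A] [NormedSpace 𝕜 A] (X Z W : A → A) : A → A :=
  lieBracket 𝕜 X (Z * W) - lieBracket 𝕜 X Z * W - Z * lieBracket 𝕜 X W

theorem fderiv_apply_eq_zero_of_Pdev_eq_zero {𝕜 A : Type*} [NontriviallyNormedField 𝕜]
    [NonUnitalNormedCommRing A] [NormedSpace 𝕜 A] {X : A → A} {e p : A} (he : IsIdempotentElem e)
    (h : Pdev 𝕜 X (fun _ => e) (fun _ => e) p = 0) : fderiv 𝕜 X p e = 0 := by
  have const_mul_const : (fun _ : A => e) * (fun _ => e) = fun _ => e := funext fun _ => he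
  simp only [Pdev, const_mul_const, Pi.sub_apply, Pi.mul_apply, lieBracket_const_right,
    sub_sub, sub_eq_zero] at h
  exact neg_eq_zero.mp (eq_zero_of_eq_mul_add_mul_of_isIdempotentElem he h)

theorem Pdev_zero_implies_constant_general {𝕜 A : Type*} [RCLike 𝕜] [NonUnitalNormedCommRing A]
    [NormedSpace 𝕜 A] {s : Set A} (hs : ∀ e ∈ s, IsIdempotentElem e)
    (hspan : Dense (Submodule.span 𝕜 s : Set A)) {X : A → A} (hX : Differentiable 𝕜 X)
    (h : ∀ e ∈ s, Pdev 𝕜 X (fun _ => e) (fun _ => e) = 0) (p q : A) : X p = X q :=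
  is_const_of_fderiv_eq_zero hX (fun x => ContinuousLinearMap.ext_on hspan fun e he =>
    fderiv_apply_eq_zero_of_Pdev_eq_zero (hs e he) (congrFun (h e he) x)) p q

/-- Proposition 5.1b: on the split semisimple F-manifold `Fin n → ℝ` with componentwise
multiplication, a `C^∞` vector field `X` with `P_X(Z,W) = 0` for all `C^∞` vector fields
`Z, W` is constant. -/
theorem Pdev_zero_implies_constant {n : ℕ}
    (X : (Fin n → ℝ) → (Fin n → ℝ)) (hX : ContDiff ℝ (⊤ : ℕ∞) X)
    (h : ∀ Z W : (Fin n → ℝ) → (Fin n → ℝ), ContDiff ℝ (⊤ : ℕ∞) Z → ContDiff ℝ (⊤ : ℕ∞) W →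
      lieBracket ℝ X (cmul Z W) - cmul (lieBracket ℝ X Z) W - cmul Z (lieBracket ℝ X W) = 0) :
    ∀ p q : Fin n → ℝ, X p = X q :=
  Pdev_zero_implies_constant_general (Set.forall_mem_range.mpr isIdempotentElem_basisFun)
    (by simp [Module.Basis.span_eq]) (hX.differentiable (by simp))
    fun _ _ => h _ _ contDiff_const contDiff_const
end

section
/- Let n be a natural number and E = (Fin n → ℝ). Equip C^∞ vector fields on E with the componentwise multiplication (X∘Y)(p)(i) := X(p)(i) · Y(p)(i). Then for all C^∞ vector fields X, Y, Z, W : E → E the F-manifold identity holds: [X∘Y, Z∘W] − [X∘Y,Z]∘W − Z∘[X∘Y,W] − X∘[Y,Z∘W] + X∘[Y,Z]∘W + X∘Z∘[Y,W] − Y∘[X,Z∘W] + Y∘[X,Z]∘W + Y∘Z∘[X,W] = 0. (This is the converse direction of Corollary 2.1: a manifold admitting a basis of pairwise commuting idempotent vector fields, i.e. Dubrovin's canonical coordinates, is an F-manifold.) -/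
/-!
Let `P_X(Z, W) = [X, Z∘W] - [X, Z]∘W - Z∘[X, W]` measure how far `[X, ·]` is from being a derivation
of the product. The F-manifold identity says `P_{X∘Y}(Z, W) = X∘P_Y(Z, W) + Y∘P_X(Z, W)`.
If the product has constant coefficients, the derivatives of `Z` and `W` cancel in `P_X(Z, W)` and
what remains is linear in `DX`; the identity is then the Leibniz rule `D(X∘Y) = X∘DY + Y∘DX`.
-/

open VectorField

section ConstantMultiplication

variable {𝕜 A : Type*} [NontriviallyNormedField 𝕜] [NormedCommRing A] [NormedAlgebra 𝕜 A]
  {X Y Z W : A → A} {p : A}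

lemma fderiv_mul_apply {E : Type*} [NormedAddCommGroup E] [NormedSpace 𝕜 E] {f g : E → A} {x : E}
    (hf : DifferentiableAt 𝕜 f x) (hg : DifferentiableAt 𝕜 g x) (v : E) :
    fderiv 𝕜 (f * g) x v = f x * fderiv 𝕜 g x v + g x * fderiv 𝕜 f x v := by
  simp [fderiv_mul hf hg]

variable (𝕜) in
/-- The failure of `[X, ·]` to be a derivation of the pointwise product of vector fields on the
commutative algebra `A`; equivalently, the Lie derivative along `X` of the multiplication tensor.
It is written `P_X(Z, W)` in the theory of F-manifolds. -/
noncomputable def leibnizDefect (X Z W : A → A) : A → A :=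
  lieBracket 𝕜 X (Z * W) - lieBracket 𝕜 X Z * W - Z * lieBracket 𝕜 X W

lemma leibnizDefect_apply (hZ : DifferentiableAt 𝕜 Z p) (hW : DifferentiableAt 𝕜 W p) :
    leibnizDefect 𝕜 X Z W p =
      fderiv 𝕜 X p (Z p) * W p + Z p * fderiv 𝕜 X p (W p) - fderiv 𝕜 X p (Z p * W p) := by
  simp only [leibnizDefect, lieBracket, Pi.sub_apply, Pi.mul_apply, fderiv_mul_apply hZ hW]
  ring

lemma leibnizDefect_mul_left (hX : DifferentiableAt 𝕜 X p) (hY : DifferentiableAt 𝕜 Y p)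
    (hZ : DifferentiableAt 𝕜 Z p) (hW : DifferentiableAt 𝕜 W p) :
    leibnizDefect 𝕜 (X * Y) Z W p =
      X p * leibnizDefect 𝕜 Y Z W p + Y p * leibnizDefect 𝕜 X Z W p := by
  simp only [leibnizDefect_apply hZ hW, fderiv_mul_apply hX hY]
  ring

theorem canonical_coordinates_give_F_manifold_general
    (hX : DifferentiableAt 𝕜 X p) (hY : DifferentiableAt 𝕜 Y p)
    (hZ : DifferentiableAt 𝕜 Z p) (hW : DifferentiableAt 𝕜 W p) :
    (lieBracket 𝕜 (X * Y) (Z * W)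
      - lieBracket 𝕜 (X * Y) Z * W
      - Z * lieBracket 𝕜 (X * Y) W
      - X * lieBracket 𝕜 Y (Z * W)
      + X * (lieBracket 𝕜 Y Z * W)
      + X * (Z * lieBracket 𝕜 Y W)
      - Y * lieBracket 𝕜 X (Z * W)
      + Y * (lieBracket 𝕜 X Z * W)
      + Y * (Z * lieBracket 𝕜 X W)) p = 0 := by
  have defect_mul := leibnizDefect_mul_left hX hY hZ hW
  simp only [leibnizDefect, Pi.add_apply, Pi.sub_apply, Pi.mul_apply] at defect_mul ⊢
  linear_combination defect_mul

end ConstantMultiplication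

/-- Corollary 2.1 (converse direction): the componentwise multiplication on vector fields
of `Fin n → ℝ` (Dubrovin's canonical coordinates) satisfies the nine-term
F-manifold identity (1) for all `C^∞` vector fields. -/
theorem canonical_coordinates_give_F_manifold {n : ℕ}
    (X Y Z W : (Fin n → ℝ) → (Fin n → ℝ))
    (hX : ContDiff ℝ (⊤ : ℕ∞) X) (hY : ContDiff ℝ (⊤ : ℕ∞) Y)
    (hZ : ContDiff ℝ (⊤ : ℕ∞) Z) (hW : ContDiff ℝ (⊤ : ℕ∞) W) :
    lieBracket ℝ (cmul X Y) (cmul Z W)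
      - cmul (lieBracket ℝ (cmul X Y) Z) W
      - cmul Z (lieBracket ℝ (cmul X Y) W)
      - cmul X (lieBracket ℝ Y (cmul Z W))
      + cmul X (cmul (lieBracket ℝ Y Z) W)
      + cmul X (cmul Z (lieBracket ℝ Y W))
      - cmul Y (lieBracket ℝ X (cmul Z W))
      + cmul Y (cmul (lieBracket ℝ X Z) W)
      + cmul Y (cmul Z (lieBracket ℝ X W)) = 0 := by
  funext p
  exact canonical_coordinates_give_F_manifold_general
    (hX.differentiable (by simp) p) (hY.differentiable (by simp) p)
    (hZ.differentiable (by simp) p) (hW.differentiable (by simp) p)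
end
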